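/- Let H ≥ 1, m ≥ 1, and let R^{(1)}, …, R^{(n)}, R^{(n+1)} be independent and identically distributed random arrays with values in ℝ^{H×m} on a probability space (Ω, P), where R^{(i)}_{h,b} is the prediction error at horizon step h for uncontrolled agent b in the i-th trajectory. Let α_1, …, α_H be strictly positive real constants, let δ ∈ (0,1), and set p := ⌈(n+1)(1−δ)⌉; assume p ≤ n. For each i define the score S^{(i)} := max_{1≤h≤H} α_h · ( max_{1≤b≤m} R^{(i)}_{h,b} ), and let Q be the p-th smallest value among S^{(1)}, …, S^{(n)}. Then P( for all h ∈ {1,…,H} and all b ∈ {1,…,m}: R^{(n+1)}_{h,b} ≤ Q/α_h ) ≥ 1 − δ. -/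

import Mathlib

/-!
The test error array lies in the prediction region exactly when its score is at most `Q`, and this
holds as soon as fewer than `p` of the calibration scores lie strictly below the test score. Among
any `n + 1` reals, tied or not, at least `p` have fewer than `p` entries strictly below them. For
exchangeable scores each index is equally likely to have this property, so the test index has it
with probability at least `p / (n + 1) ≥ 1 - δ`.
-/

open MeasureTheory ProbabilityTheory

/-- The `k`-th smallest value (k-th order statistic, 1-indexed) of a finite tuple of reals:
the `k`-th entry of the tuple sorted in non-decreasing order. -/
noncomputable def kthSmallest {m : ℕ} (r : Fin m → ℝ) (k : ℕ) : ℝ :=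
  ((List.ofFn r).mergeSort (· ≤ ·)).getD (k - 1) 0

open scoped ENNReal Finset

section OrderStatistics

lemma kthSmallest_succ {n : ℕ} (r : Fin n → ℝ) (j : Fin n) :
    kthSmallest r (j + 1) = r (Tuple.sort r j) := by
  have hsort : (List.ofFn r).mergeSort (· ≤ ·) = List.ofFn (r ∘ Tuple.sort r) :=
    ((List.mergeSort_perm _ _).trans ((Tuple.sort r).ofFn_comp_perm r).symm).eq_of_pairwise'
      (List.pairwise_mergeSort' (· ≤ ·) _) (Tuple.monotone_sort r).sortedLE_ofFn.pairwise
  simp [kthSmallest, hsort]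

lemma le_kthSmallest_of_card_lt {n k : ℕ} {r : Fin n → ℝ} {x : ℝ} (hk : k ≤ n)
    (h : #{i | r i < x} < k) : x ≤ kthSmallest r k := by
  obtain ⟨j, rfl⟩ := Nat.exists_eq_add_one_of_ne_zero (Nat.ne_zero_of_lt h)
  by_contra! hlt
  rw [kthSmallest_succ r ⟨j, hk⟩] at hlt
  have hcount : j < #{i | r (Tuple.sort r i) < x} :=
    (Tuple.lt_card_lt_iff_apply_lt_of_monotone (j := ⟨j, hk⟩) (Tuple.monotone_sort r)).2 hlt
  have hperm : #{i | r (Tuple.sort r i) < x} = #{i | r i < x} :=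
    Finset.card_equiv (Tuple.sort r) (by simp)
  omega

end OrderStatistics

section StrictRank

variable {ι β : Type*} [Fintype ι] [LinearOrder β]

/-- The strict rank of the index `j` in the family `r`: the number of entries strictly below `r j`.
Tied entries share the smallest rank available to them, and ranks start at `0`. -/
def strictRank (r : ι → β) (j : ι) : ℕ := #{i | r i < r j}

lemma strictRank_comp_perm (r : ι → β) (σ : Equiv.Perm ι) (j : ι) :
    strictRank (r ∘ σ) j = strictRank r (σ j) :=
  Finset.card_equiv σ (by simp)

lemma le_card_strictRank_lt (r : ι → β) {k : ℕ} (hk : k ≤ Fintype.card ι) :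
    k ≤ #{j | strictRank r j < k} := by
  by_cases hlow : ∀ j, strictRank r j < k
  · simpa [hlow] using hk
  · -- All entries below a minimal one of rank at least `k` have rank below `k`.
    obtain ⟨j, hj, hmin⟩ := Finset.exists_min_image {j | k ≤ strictRank r j} r
      (by simpa [Finset.Nonempty] using hlow)
    simp only [Finset.mem_filter_univ] at hj hmin
    refine hj.trans (Finset.card_le_card fun i hi => ?_)
    simp only [Finset.mem_filter_univ] at hi ⊢
    exact not_le.1 fun hki => hi.not_ge (hmin i hki)

lemma measurable_strictRank [TopologicalSpace β] [OrderClosedTopology β]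
    [SecondCountableTopology β] [MeasurableSpace β] [OpensMeasurableSpace β] (j : ι) :
    Measurable fun r : ι → β => strictRank r j := by
  simp only [strictRank, Finset.card_filter]
  exact Finset.measurable_fun_sum _ fun i _ => Measurable.ite
    (measurableSet_lt (measurable_pi_apply i) (measurable_pi_apply j))
    measurable_const measurable_const

lemma le_kthSmallest_of_strictRank_last_lt {n k : ℕ} {r : Fin (n + 1) → ℝ} (hk : k ≤ n)
    (h : strictRank r (Fin.last n) < k) :
    r (Fin.last n) ≤ kthSmallest (fun i : Fin n => r i.castSucc) k := by
  refine le_kthSmallest_of_card_lt hk (lt_of_le_of_lt ?_ h)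
  exact Finset.card_le_card_of_injOn Fin.castSucc (fun i hi => by simpa using hi)
    (Fin.castSucc_injective n).injOn

end StrictRank

lemma mul_measure_univ_le_sum_measure {Ω ι : Type*} [MeasurableSpace Ω] {μ : Measure Ω} [Fintype ι]
    {A : ι → Set Ω} [∀ ω, DecidablePred (ω ∈ A ·)] (hA : ∀ i, NullMeasurableSet (A i) μ)
    {k : ℕ} (hk : ∀ᵐ ω ∂μ, k ≤ #{i | ω ∈ A i}) :
    k * μ Set.univ ≤ ∑ i, μ (A i) := by
  calc k * μ Set.univ = ∫⁻ _, k ∂μ := (lintegral_const _).symm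
    _ ≤ ∫⁻ ω, ∑ i, (A i).indicator 1 ω ∂μ := by
      refine lintegral_mono_ae (hk.mono fun ω hω => ?_)
      simpa [Set.indicator_apply] using hω
    _ = ∑ i, ∫⁻ ω, (A i).indicator 1 ω ∂μ :=
      lintegral_finsetSum' _ fun i _ => aemeasurable_one.indicator₀ (hA i)
    _ = ∑ i, μ (A i) := Finset.sum_congr rfl fun i _ => lintegral_indicator_one₀ (hA i)

section Exchangeability

variable {Ω ι E : Type*} [MeasurableSpace Ω] [MeasurableSpace E] {μ : Measure Ω}

/-- Exchangeability of a family of random variables: permuting the indices does not change the joint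
law. Almost everywhere measurability is part of `IdentDistrib`. -/
def Exchangeable (X : ι → Ω → E) (μ : Measure Ω) : Prop :=
  ∀ σ : Equiv.Perm ι, IdentDistrib (fun ω i => X (σ i) ω) (fun ω i => X i ω) μ μ

lemma exchangeable_of_iIndepFun_of_identDistrib [Countable ι] {X : ι → Ω → E}
    (hindep : iIndepFun X μ) (hident : ∀ i j, IdentDistrib (X i) (X j) μ μ) :
    Exchangeable X μ := fun σ =>
  IdentDistrib.pi (fun i => hident (σ i) i) (hindep.precomp σ.injective) hindep

lemma Exchangeable.comp {F : Type*} [MeasurableSpace F] {X : ι → Ω → E} (hX : Exchangeable X μ)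
    {f : E → F} (hf : Measurable f) : Exchangeable (fun i => f ∘ X i) μ := fun σ =>
  (hX σ).comp (u := fun x i => f (x i)) (by fun_prop)

namespace Exchangeable

variable [Fintype ι] [LinearOrder E] [TopologicalSpace E] [OrderClosedTopology E]
  [SecondCountableTopology E] [OpensMeasurableSpace E] {X : ι → Ω → E}

lemma measure_strictRank_lt_eq (hX : Exchangeable X μ) (k : ℕ) (i j : ι) :
    μ {ω | strictRank (X · ω) i < k} = μ {ω | strictRank (X · ω) j < k} := by
  classical
  have hswap : ∀ ω, strictRank (fun l => X (Equiv.swap i j l) ω) j = strictRank (X · ω) i :=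
    fun ω => by
      simpa [Function.comp_def] using strictRank_comp_perm (X · ω) (Equiv.swap i j) j
  simpa [Set.preimage, hswap] using
    (hX (Equiv.swap i j)).measure_mem_eq (measurable_strictRank j (measurableSet_Iio (a := k)))

lemma mul_measure_univ_le_card_mul_measure_strictRank_lt (hX : Exchangeable X μ) {k : ℕ}
    (hk : k ≤ Fintype.card ι) (j : ι) :
    k * μ Set.univ ≤ Fintype.card ι * μ {ω | strictRank (X · ω) j < k} := by
  have hmeas : ∀ i, NullMeasurableSet {ω | strictRank (X · ω) i < k} μ := fun i =>
    (hX 1).aemeasurable_snd.nullMeasurable (measurable_strictRank i measurableSet_Iio)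
  calc k * μ Set.univ ≤ ∑ i, μ {ω | strictRank (X · ω) i < k} :=
      mul_measure_univ_le_sum_measure hmeas (.of_forall fun ω => le_card_strictRank_lt (X · ω) hk)
    _ = Fintype.card ι * μ {ω | strictRank (X · ω) j < k} := by
      simp [hX.measure_strictRank_lt_eq k _ j]

end Exchangeable

lemma Exchangeable.div_le_measure_last_le_kthSmallest [IsProbabilityMeasure μ] {n k : ℕ}
    {S : Fin (n + 1) → Ω → ℝ} (hS : Exchangeable S μ) (hk : k ≤ n) :
    (k : ℝ≥0∞) / (n + 1) ≤
      μ {ω | S (Fin.last n) ω ≤ kthSmallest (fun i : Fin n => S i.castSucc ω) k} := by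
  have hrank : (k : ℝ≥0∞) ≤ (n + 1) * μ {ω | strictRank (S · ω) (Fin.last n) < k} := by
    simpa using hS.mul_measure_univ_le_card_mul_measure_strictRank_lt
      (k := k) (by simpa using hk.trans n.le_succ) (Fin.last n)
  exact (ENNReal.div_le_of_le_mul' hrank).trans
    (measure_mono fun ω hω => le_kthSmallest_of_strictRank_last_lt hk hω)

end Exchangeability

section Score

variable {ι κ : Type*} [Fintype ι] [Nonempty ι] [Fintype κ] [Nonempty κ]

/-- The conformal score of an error array `x`, indexed by horizon steps and agents: at each step the
worst error over the agents, then the worst of these over the steps, weighted by `α`. -/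
noncomputable def maxScore (α : ι → ℝ) (x : ι → κ → ℝ) : ℝ :=
  Finset.univ.sup' Finset.univ_nonempty
    (fun h => α h * Finset.univ.sup' Finset.univ_nonempty (fun b => x h b))

lemma measurable_maxScore (α : ι → ℝ) : Measurable (maxScore (κ := κ) α) := by
  refine (Continuous.finset_sup'_apply _ fun h _ => continuous_const.mul ?_).measurable
  exact Continuous.finset_sup'_apply _ fun b _ => by fun_prop

lemma maxScore_le_iff {α : ι → ℝ} (hα : ∀ h, 0 < α h) {x : ι → κ → ℝ} {q : ℝ} :
    maxScore α x ≤ q ↔ ∀ h b, x h b ≤ q / α h := by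
  simp [maxScore, ← le_div_iff₀' (hα _)]

end Score

theorem conformal_multi_agent_general {Ω ι κ : Type*} [MeasurableSpace Ω] (P : Measure Ω)
    [IsProbabilityMeasure P] [Fintype ι] [Nonempty ι] [Fintype κ] [Nonempty κ]
    {n p : ℕ} {R : Fin (n + 1) → Ω → ι → κ → ℝ} (hR : Exchangeable R P)
    {α : ι → ℝ} (hα : ∀ h, 0 < α h) {δ : ℝ} (hp : ((n : ℝ) + 1) * (1 - δ) ≤ p) (hpn : p ≤ n) :
    ENNReal.ofReal (1 - δ) ≤ P {ω | ∀ h b, R (Fin.last n) ω h b ≤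
      kthSmallest (fun i : Fin n => maxScore α (R i.castSucc ω)) p / α h} := by
  have hn : (0 : ℝ) < n + 1 := by positivity
  simp only [← maxScore_le_iff hα]
  calc ENNReal.ofReal (1 - δ) ≤ ENNReal.ofReal (p / (n + 1)) :=
      ENNReal.ofReal_le_ofReal ((le_div_iff₀' hn).2 hp)
    _ = (p : ℝ≥0∞) / (n + 1) := by
      rw [ENNReal.ofReal_div_of_pos hn, ENNReal.ofReal_natCast]; norm_cast
    _ ≤ _ := (hR.comp (measurable_maxScore α)).div_le_measure_last_le_kthSmallest hpn

/-- Coverage guarantee of equation (8) of the paper, with `H+1 ≥ 1` horizon steps and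
`m+1 ≥ 1` uncontrolled agents: for i.i.d. random error arrays `R 0, …, R n` in
`ℝ^{(H+1)×(m+1)}`, strictly positive constants `α`, `δ ∈ (0,1)` and
`p := ⌈(n+1)(1-δ)⌉ ≤ n`, letting `S i := max_h α h * (max_b R i h b)` and `Q` be the
`p`-th smallest of the first `n` scores, the test array satisfies `R h b ≤ Q / α h` for all
`h` and all `b` simultaneously with probability at least `1 - δ`. -/
theorem conformal_multi_agent {Ω : Type*} [MeasurableSpace Ω] (P : Measure Ω)
    [IsProbabilityMeasure P]
    (H m n : ℕ) (R : Fin (n + 1) → Ω → (Fin (H + 1) → Fin (m + 1) → ℝ))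
    (hmeas : ∀ i, Measurable (R i))
    (hindep : iIndepFun R P)
    (hident : ∀ i j, IdentDistrib (R i) (R j) P P)
    (α : Fin (H + 1) → ℝ) (hα : ∀ h, 0 < α h)
    (δ : ℝ) (hδ : δ ∈ Set.Ioo (0 : ℝ) 1)
    (p : ℕ) (hp : p = ⌈((n : ℝ) + 1) * (1 - δ)⌉₊) (hpn : p ≤ n)
    (S : Fin (n + 1) → Ω → ℝ)
    (hS : ∀ i ω, S i ω = Finset.univ.sup' Finset.univ_nonempty
      (fun h => α h * Finset.univ.sup' Finset.univ_nonempty (fun b => R i ω h b)))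
    (Q : Ω → ℝ)
    (hQ : ∀ ω, Q ω = kthSmallest (fun i : Fin n => S i.castSucc ω) p) :
    P {ω | ∀ h b, R (Fin.last n) ω h b ≤ Q ω / α h} ≥ ENNReal.ofReal (1 - δ) := by
  obtain rfl : S = fun i ω => maxScore α (R i ω) := funext₂ hS
  simpa only [hQ] using conformal_multi_agent_general P
    (exchangeable_of_iIndepFun_of_identDistrib hindep hident) hα (hp ▸ Nat.le_ceil _) hpn
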